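/- arXiv:0810.2733 — 5 statements merged into one kernel-verified Lean document; each statement's English description precedes it below -/
import Mathlib

section
/- Let 0 ≤ θ₁ < θ₂ < θ₃ < θ₄ ≤ 2π, set |I| = θ₄ − θ₁, |J| = θ₃ − θ₂, |R| = θ₄ − θ₃, |L| = θ₂ − θ₁, let C = (|I| · |J|) / (|R| · |L|) and T = (sin(|I|/2) · sin(|J|/2)) / (sin(|R|/2) · sin(|L|/2)). Then T ≥ (1 / (4π²)) · C · (2π − |I|)². -/
/-!
With `a = |I|/2`, `b = |J|/2`, `r = |R|/2`, `l = |L|/2` the claim reads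
`(sin a / a) (sin b / b) / ((sin r / r) (sin l / l)) ≥ (1 - a/π)²`.
The denominator is at most `1`, since `sin x ≤ x`. For the numerator,
`x (1 - x/π) ≤ sin x` on `[0, π]` (`parabola_le_sin`) bounds the two factors below by `1 - a/π` and
`1 - b/π`, and the latter is at least `1 - a/π` because `b ≤ a`.
-/

/-- On this half of `[0, π]` the Taylor bound `x - x³/6 < sin x` suffices, because
`x π ≤ π²/2 < 6`. -/
lemma parabola_le_sin_of_le_half_pi {x : ℝ} (hx : 0 ≤ x) (hx' : x ≤ Real.pi / 2) :
    x * (1 - x / Real.pi) ≤ Real.sin x := by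
  rcases hx.eq_or_lt with rfl | hx
  · simp
  have hπ : Real.pi < 3.15 := Real.pi_lt_d2
  have hs := Real.sin_gt_sub_cube hx
  have hq : x / 6 ≤ 1 / Real.pi := by
    rw [div_le_div_iff₀ (by norm_num) Real.pi_pos]
    nlinarith [Real.pi_pos]
  have : x ^ 2 * (x / 6) ≤ x ^ 2 * (1 / Real.pi) := by gcongr
  calc x * (1 - x / Real.pi) = x - x ^ 2 * (1 / Real.pi) := by ring
    _ ≤ x - x ^ 3 / 6 := by linarith
    _ ≤ Real.sin x := hs.le

lemma parabola_le_sin {x : ℝ} (hx : 0 ≤ x) (hx' : x ≤ Real.pi) :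
    x * (1 - x / Real.pi) ≤ Real.sin x := by
  rcases le_total x (Real.pi / 2) with h | h
  · exact parabola_le_sin_of_le_half_pi hx h
  · -- Both sides are invariant under `x ↦ π - x`.
    have key := parabola_le_sin_of_le_half_pi (x := Real.pi - x) (by linarith) (by linarith)
    rw [Real.sin_pi_sub] at key
    convert key using 1
    field_simp
    ring


/-- Lower bound on the Möbius cross ratio `T` in terms of the arclength cross
ratio `C`: `T ≥ (1/(4π²)) · C · (2π − |I|)²`. -/
theorem cross_ratio_lower_bound (θ₁ θ₂ θ₃ θ₄ : ℝ)
    (h0 : 0 ≤ θ₁) (h12 : θ₁ < θ₂) (h23 : θ₂ < θ₃) (h34 : θ₃ < θ₄)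
    (h4 : θ₄ ≤ 2 * Real.pi) :
    (Real.sin ((θ₄ - θ₁) / 2) * Real.sin ((θ₃ - θ₂) / 2)) /
      (Real.sin ((θ₄ - θ₃) / 2) * Real.sin ((θ₂ - θ₁) / 2)) ≥
    (1 / (4 * Real.pi ^ 2)) *
      (((θ₄ - θ₁) * (θ₃ - θ₂)) / ((θ₄ - θ₃) * (θ₂ - θ₁))) *
      (2 * Real.pi - (θ₄ - θ₁)) ^ 2 := by
  have hπ0 := Real.pi_pos
  obtain ⟨a, ha⟩ : ∃ a, θ₄ - θ₁ = 2 * a := ⟨(θ₄ - θ₁) / 2, by ring⟩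
  obtain ⟨b, hb⟩ : ∃ b, θ₃ - θ₂ = 2 * b := ⟨(θ₃ - θ₂) / 2, by ring⟩
  obtain ⟨r, hr⟩ : ∃ r, θ₄ - θ₃ = 2 * r := ⟨(θ₄ - θ₃) / 2, by ring⟩
  obtain ⟨l, hl⟩ : ∃ l, θ₂ - θ₁ = 2 * l := ⟨(θ₂ - θ₁) / 2, by ring⟩
  have hb0 : 0 < b := by linarith
  have hr0 : 0 < r := by linarith
  have hl0 : 0 < l := by linarith
  have hba : b ≤ a := by linarith
  have haπ : a ≤ Real.pi := by linarith
  have ha0 : 0 < a := by linarith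
  have hsr : 0 < Real.sin r := Real.sin_pos_of_pos_of_lt_pi hr0 (by linarith)
  have hsl : 0 < Real.sin l := Real.sin_pos_of_pos_of_lt_pi hl0 (by linarith)
  rw [ha, hb, hr, hl]
  simp only [mul_div_cancel_left₀ _ (two_ne_zero' ℝ)]
  have hu : 0 ≤ 1 - a / Real.pi := by
    rw [sub_nonneg, div_le_one hπ0]
    exact haπ
  have hA : a * (1 - a / Real.pi) ≤ Real.sin a := parabola_le_sin ha0.le haπ
  have hB : b * (1 - a / Real.pi) ≤ Real.sin b :=
    le_trans (by gcongr) (parabola_le_sin hb0.le (by linarith))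
  have hsa : 0 ≤ Real.sin a := Real.sin_nonneg_of_nonneg_of_le_pi ha0.le haπ
  calc 1 / (4 * Real.pi ^ 2) * (2 * a * (2 * b) / (2 * r * (2 * l)))
        * (2 * Real.pi - 2 * a) ^ 2
      = (a * (1 - a / Real.pi)) * (b * (1 - a / Real.pi)) / (r * l) := by
        field_simp
        ring
    _ ≤ (Real.sin a * Real.sin b) / (r * l) := by gcongr
    _ ≤ (Real.sin a * Real.sin b) / (Real.sin r * Real.sin l) := by
        have hsb : 0 ≤ Real.sin b := le_trans (by positivity) hB
        gcongr
        · exact Real.sin_le hr0.le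
        · exact Real.sin_le hl0.le
end

section
/- Let 0 ≤ θ₁ < θ₂ < θ₃ < θ₄ ≤ 2π, set |I| = θ₄ − θ₁, |J| = θ₃ − θ₂, |R| = θ₄ − θ₃, |L| = θ₂ − θ₁, let C = (|I| · |J|) / (|R| · |L|) and T = (sin(|I|/2) · sin(|J|/2)) / (sin(|R|/2) · sin(|L|/2)). Then T ≤ (π²/4) · C. -/
/-!
In terms of the half-lengths `i = l + j + r ≤ π` of the arcs, the claim says
`s i * s j ≤ π² / 4 * (s r * s l)` for `s x = sin x / x`. Always `s ≤ 1`, and Jordan's inequality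
gives `s x ≥ 2 / π` for `x ≤ π / 2`; this settles the case `l, r ≤ π / 2`. If instead `l ≥ π / 2`,
then `r ≤ π / 2`, and since `l ≤ i` lie in `[π / 2, π]`, where sine decreases, `s i ≤ s l`; the
remaining factors satisfy `s j ≤ 1 ≤ π / 2 * s r`. The case `r ≥ π / 2` is symmetric.
-/

/-- Jordan's inequality, solved for the angle. -/
lemma le_half_pi_mul_sin {x : ℝ} (h0 : 0 ≤ x) (h : x ≤ Real.pi / 2) :
    x ≤ Real.pi / 2 * Real.sin x := by
  have h1 := mul_le_mul_of_nonneg_left (Real.mul_le_sin h0 h) (by positivity : 0 ≤ Real.pi / 2)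
  have h2 : Real.pi / 2 * (2 / Real.pi * x) = x := by
    field_simp
  linarith

/-- The case of one long outer arc, with half-length `l ≥ π / 2`. -/
lemma sin_mul_sin_le_of_half_pi_le {l j r : ℝ} (hl : Real.pi / 2 ≤ l) (hj : 0 < j) (hr : 0 < r)
    (hs : l + j + r ≤ Real.pi) :
    Real.sin (l + j + r) * Real.sin j * (r * l) ≤
      Real.pi ^ 2 / 4 * ((l + j + r) * j) * (Real.sin r * Real.sin l) := by
  have hpi := Real.pi_gt_three
  have hi0 : 0 ≤ Real.sin (l + j + r) := Real.sin_nonneg_of_nonneg_of_le_pi (by linarith) hs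
  have hl0 : 0 < Real.sin l := Real.sin_pos_of_pos_of_lt_pi (by linarith) (by linarith)
  have hj0 : 0 < Real.sin j := Real.sin_pos_of_pos_of_lt_pi hj (by linarith)
  have hr0 : 0 < Real.sin r := Real.sin_pos_of_pos_of_lt_pi hr (by linarith)
  have hanti : Real.sin (l + j + r) ≤ Real.sin l := by
    rw [← Real.sin_pi_sub (l + j + r), ← Real.sin_pi_sub l]
    exact Real.sin_le_sin_of_le_of_le_pi_div_two (by linarith) (by linarith) (by linarith)
  have h1 : Real.sin (l + j + r) * l ≤ Real.sin l * (l + j + r) :=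
    mul_le_mul hanti (by linarith) (by linarith) hl0.le
  have h2 : Real.sin j ≤ j := Real.sin_le hj.le
  have h3 : r ≤ Real.pi ^ 2 / 4 * Real.sin r :=
    (le_half_pi_mul_sin hr.le (by linarith)).trans
      (mul_le_mul_of_nonneg_right (by nlinarith) hr0.le)
  have hi : 0 < l + j + r := by linarith
  calc Real.sin (l + j + r) * Real.sin j * (r * l)
      = (Real.sin (l + j + r) * l) * Real.sin j * r := by ring
    _ ≤ (Real.sin l * (l + j + r)) * j * (Real.pi ^ 2 / 4 * Real.sin r) := by gcongr
    _ = _ := by ring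

lemma sin_mul_sin_le {l j r : ℝ} (hl : 0 < l) (hj : 0 < j) (hr : 0 < r)
    (hs : l + j + r ≤ Real.pi) :
    Real.sin (l + j + r) * Real.sin j * (r * l) ≤
      Real.pi ^ 2 / 4 * ((l + j + r) * j) * (Real.sin r * Real.sin l) := by
  rcases le_total (Real.pi / 2) l with h | hl2
  · exact sin_mul_sin_le_of_half_pi_le h hj hr hs
  rcases le_total (Real.pi / 2) r with h | hr2
  · have := sin_mul_sin_le_of_half_pi_le h hj hl (by linarith)
    rw [show r + j + l = l + j + r by ring] at this
    linarith
  have hj0 : 0 < Real.sin j := Real.sin_pos_of_pos_of_lt_pi hj (by linarith)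
  have hr0 : 0 < Real.sin r := Real.sin_pos_of_pos_of_lt_pi hr (by linarith)
  have h1 : Real.sin (l + j + r) ≤ l + j + r := Real.sin_le (by linarith)
  have h2 : Real.sin j ≤ j := Real.sin_le hj.le
  have h3 := le_half_pi_mul_sin hr.le hr2
  have h4 := le_half_pi_mul_sin hl.le hl2
  calc Real.sin (l + j + r) * Real.sin j * (r * l)
      ≤ (l + j + r) * j * ((Real.pi / 2 * Real.sin r) * (Real.pi / 2 * Real.sin l)) := by gcongr
    _ = _ := by ring


/-- Upper bound on the Möbius cross ratio `T` in terms of the arclength cross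
ratio `C`: `T ≤ (π²/4) · C`. -/
theorem cross_ratio_upper_bound (θ₁ θ₂ θ₃ θ₄ : ℝ)
    (h0 : 0 ≤ θ₁) (h12 : θ₁ < θ₂) (h23 : θ₂ < θ₃) (h34 : θ₃ < θ₄)
    (h4 : θ₄ ≤ 2 * Real.pi) :
    (Real.sin ((θ₄ - θ₁) / 2) * Real.sin ((θ₃ - θ₂) / 2)) /
      (Real.sin ((θ₄ - θ₃) / 2) * Real.sin ((θ₂ - θ₁) / 2)) ≤
    (Real.pi ^ 2 / 4) *
      (((θ₄ - θ₁) * (θ₃ - θ₂)) / ((θ₄ - θ₃) * (θ₂ - θ₁))) := by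
  have hr0 : 0 < Real.sin ((θ₄ - θ₃) / 2) :=
    Real.sin_pos_of_pos_of_lt_pi (by linarith) (by linarith)
  have hl0 : 0 < Real.sin ((θ₂ - θ₁) / 2) :=
    Real.sin_pos_of_pos_of_lt_pi (by linarith) (by linarith)
  have hr : 0 < θ₄ - θ₃ := by linarith
  have hl : 0 < θ₂ - θ₁ := by linarith
  have key := sin_mul_sin_le (l := (θ₂ - θ₁) / 2) (j := (θ₃ - θ₂) / 2) (r := (θ₄ - θ₃) / 2)
    (by linarith) (by linarith) (by linarith) (by linarith)
  rw [show (θ₂ - θ₁) / 2 + (θ₃ - θ₂) / 2 + (θ₄ - θ₃) / 2 = (θ₄ - θ₁) / 2 by ring] at key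
  rw [← mul_div_assoc, div_le_div_iff₀ (mul_pos hr0 hl0) (mul_pos hr hl)]
  linarith
end

section
/- Let μ be a Borel probability measure on the unit circle 𝕋 = {ζ ∈ ℂ : |ζ| = 1} whose barycenter is zero, i.e. ∫_𝕋 ζ dμ(ζ) = 0. Let I ⊂ 𝕋 be an arc segment and suppose μ(I) < δ for some δ with 0 < δ ≤ 1/2. Then the arclength of the complementary arc satisfies |𝕋 \ I| ≥ 2 arccos(δ/(1 − δ)). -/
/-!
Let `m = (a + b) / 2` be the midpoint of `I` and `h = (b - a) / 2` its half-length. The function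
`f ζ = Re (ζ e^{-im})` is at most `1` on the unit circle, and at most `cos h` off `I`, since there
`f ζ = cos s` with `h < |s| ≤ π` (`re_mul_exp_le_cos`). Because `∫ f dμ = 0`, integrating the bound
`f ≤ cos h + (1 - cos h) 1_I` gives `0 ≤ cos h + (1 - cos h) μ(I)`. With `K = cos (π - h) = - cos h`
this reads `K (1 - μ(I)) ≤ μ(I)`, hence `K ≤ δ / (1 - δ)` when `μ(I) < δ`; applying `arccos` to
`cos (π - h) ≤ δ / (1 - δ)` bounds the half-length `π - h` of the complementary arc.
-/

/-- A point of the unit circle outside the arc of half-length `h` about `e^{im}` is at angular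
distance more than `h` from `e^{im}`, so its component in that direction is at most `cos h`. -/
lemma re_mul_exp_le_cos (m h : ℝ) (hh : 0 ≤ h) (z : ℂ) (hz : ‖z‖ = 1)
    (hzI : ¬ ∃ t ∈ Set.Icc (m - h) (m + h), z = Complex.exp (t * Complex.I)) :
    (z * Complex.exp (-(m * Complex.I))).re ≤ Real.cos h := by
  set w := z * Complex.exp (-(m * Complex.I)) with hw
  have hwn : ‖w‖ = 1 := by
    rw [hw, norm_mul, hz, one_mul, ← neg_mul, ← Complex.ofReal_neg, Complex.norm_exp_ofReal_mul_I]
  have hwe : Complex.exp (w.arg * Complex.I) = w := by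
    have := Complex.norm_mul_exp_arg_mul_I w
    rwa [hwn, Complex.ofReal_one, one_mul] at this
  have hz' : z = Complex.exp (((m + w.arg : ℝ) : ℂ) * Complex.I) := by
    rw [Complex.ofReal_add, add_mul, Complex.exp_add, hwe, hw, Complex.exp_neg]
    field_simp [Complex.exp_ne_zero]
  have hs : h < |w.arg| := by
    by_contra! hle
    obtain ⟨h1, h2⟩ := abs_le.mp hle
    exact hzI ⟨m + w.arg, ⟨by linarith, by linarith⟩, hz'⟩
  have hre : w.re = Real.cos w.arg := by
    conv_lhs => rw [← hwe]
    exact Complex.exp_ofReal_mul_I_re _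
  rw [hre, ← Real.cos_abs w.arg]
  exact Real.cos_le_cos_of_nonneg_of_le_pi hh (Complex.abs_arg_le_pi w) hs.le

/-- If a Borel probability measure `μ` on the unit circle has barycenter zero
and an arc segment `I` has `μ`-measure less than `δ ≤ 1/2`, then the arclength
of the complementary arc is at least `2 arccos(δ/(1 − δ))`. -/
theorem complement_arc_length_of_centered_measure
    (μ : MeasureTheory.Measure ℂ) [MeasureTheory.IsProbabilityMeasure μ]
    (hsupp : μ (Metric.sphere (0 : ℂ) 1)ᶜ = 0)
    (hbary : (∫ ζ, ζ ∂μ) = 0)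
    (a b : ℝ) (hab0 : 0 ≤ b - a) (hab2 : b - a ≤ 2 * Real.pi)
    (I : Set ℂ)
    (hI : I = {w : ℂ | ∃ t ∈ Set.Icc a b, w = Complex.exp (t * Complex.I)})
    (δ : ℝ) (hδ0 : 0 < δ) (hδ : δ ≤ 1 / 2)
    (hμI : μ I < ENNReal.ofReal δ) :
    2 * Real.pi - (b - a) ≥ 2 * Real.arccos (δ / (1 - δ)) := by
  set m := (a + b) / 2 with hm
  set h := (b - a) / 2 with hh
  set e := Complex.exp (-(m * Complex.I)) with he
  have hen : ‖e‖ = 1 := by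
    rw [he, ← neg_mul, ← Complex.ofReal_neg, Complex.norm_exp_ofReal_mul_I]
  have hae : ∀ᵐ z ∂μ, ‖z‖ = 1 := by
    rw [MeasureTheory.ae_iff]
    convert hsupp using 2
    ext z; simp
  have hint : MeasureTheory.Integrable (fun z : ℂ => z) μ :=
    MeasureTheory.Integrable.of_bound measurable_id.aestronglyMeasurable 1
      (hae.mono fun z hz => hz.le)
  have hImeas : MeasurableSet I := by
    have : I = (fun t : ℝ => Complex.exp (t * Complex.I)) '' Set.Icc a b := by
      rw [hI]; ext w; simp [eq_comm]
    rw [this]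
    exact (isCompact_Icc.image (by fun_prop)).isClosed.measurableSet
  have hp : μ.real I < δ := by
    rw [MeasureTheory.measureReal_def]
    exact (ENNReal.lt_ofReal_iff_toReal_lt (MeasureTheory.measure_ne_top μ I)).mp hμI
  have hp0 : 0 ≤ μ.real I := MeasureTheory.measureReal_nonneg
  have hf0 : ∫ z, (z * e).re ∂μ = 0 := by
    have h1 : ∫ z, (z * e).re ∂μ = (∫ z, z * e ∂μ).re :=
      integral_re (𝕜 := ℂ) (hint.mul_const e)
    rw [h1, MeasureTheory.integral_mul_const, hbary]
    simp
  have hbound : ∀ᵐ z ∂μ, (z * e).re ≤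
      Real.cos h + I.indicator (fun _ => 1 - Real.cos h) z := by
    filter_upwards [hae] with z hz
    by_cases hzI : z ∈ I
    · have : (z * e).re ≤ ‖z * e‖ := Complex.re_le_norm _
      rw [norm_mul, hz, hen] at this
      rw [Set.indicator_of_mem hzI]
      linarith
    · rw [Set.indicator_of_notMem hzI, add_zero]
      refine re_mul_exp_le_cos m h (by linarith) z hz ?_
      rw [hI] at hzI
      have h1 : m - h = a := by rw [hm, hh]; ring
      have h2 : m + h = b := by rw [hm, hh]; ring
      rw [h1, h2]
      exact hzI
  have hind : MeasureTheory.Integrable (I.indicator fun _ => 1 - Real.cos h) μ :=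
    (MeasureTheory.integrable_const _).indicator hImeas
  have key : 0 ≤ Real.cos h + μ.real I * (1 - Real.cos h) := by
    have h1 := MeasureTheory.integral_mono_ae (hint.mul_const e).re
      ((MeasureTheory.integrable_const (Real.cos h)).add hind) hbound
    have h2 : ∫ z, (Real.cos h + I.indicator (fun _ => 1 - Real.cos h) z) ∂μ
        = Real.cos h + μ.real I * (1 - Real.cos h) := by
      rw [MeasureTheory.integral_add (MeasureTheory.integrable_const _) hind,
        MeasureTheory.integral_indicator_const _ hImeas]
      simp
    rw [← h2, ← hf0]
    exact h1
  have hcos : Real.cos (Real.pi - h) ≤ δ / (1 - δ) := by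
    rw [Real.cos_pi_sub, le_div_iff₀ (by linarith)]
    nlinarith [mul_nonneg (sub_nonneg.mpr hp.le) (sub_nonneg.mpr (Real.cos_le_one h))]
  have hfin := Real.arccos_le_arccos hcos
  rw [Real.arccos_cos (by linarith) (by linarith)] at hfin
  linarith
end

section
/- For every real number δ with 0 < δ < 1/2 one has 1 / ((1 − δ) · (−log(1 − δ))) < (1 + 2δ²) · (1 / (δ · (1 − δ/2))). Equivalently, the ratio of the hyperbolic density of the punctured unit disk Δ \ {0} at the point x = 1 − δ to the hyperbolic density of the unit disk Δ at x, namely (δ(1 − δ/2)) / ((1 − δ)(−log(1 − δ))), is less than 1 + 2δ². -/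
/-- The two-term truncation of the Taylor series `-log (1 - δ) = ∑ δ ^ (n + 1) / (n + 1)`,
whose terms are nonnegative. -/
lemma add_sq_half_le_neg_log (δ : ℝ) (h0 : 0 ≤ δ) (h1 : δ < 1) :
    δ + δ ^ 2 / 2 ≤ -Real.log (1 - δ) := by
  have hs := Real.hasSum_pow_div_log_of_abs_lt_one (x := δ) (by rwa [abs_of_nonneg h0])
  have h := sum_le_hasSum (Finset.range 2) (fun n _ => by positivity) hs
  norm_num [Finset.sum_range_succ] at h
  linarith

/-- The ratio of the hyperbolic density of the punctured disk at `1 − δ` to the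
hyperbolic density of the disk at `1 − δ` is less than `1 + 2δ²`, for
`0 < δ < 1/2`. -/
theorem punctured_disk_density_ratio (δ : ℝ) (h0 : 0 < δ) (h1 : δ < 1 / 2) :
    1 / ((1 - δ) * (-Real.log (1 - δ))) <
      (1 + 2 * δ ^ 2) * (1 / (δ * (1 - δ / 2))) := by
  have hL := add_sq_half_le_neg_log δ h0.le (by linarith)
  have hLpos : 0 < -Real.log (1 - δ) := lt_of_lt_of_le (by positivity) hL
  have hd : 0 < 1 - δ := by linarith
  have hd2 : 0 < 1 - δ / 2 := by linarith
  rw [mul_one_div, div_lt_div_iff₀ (by positivity) (by positivity), one_mul]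
  -- The truncated series already suffices: the difference of the two sides then
  -- equals `δ ^ 3 * (3 / 2 - δ - δ ^ 2)`, which is positive for `δ < 1 / 2`.
  have key : 0 < δ ^ 3 * (3 / 2 - δ - δ ^ 2) := mul_pos (by positivity) (by nlinarith)
  calc δ * (1 - δ / 2)
      < (1 + 2 * δ ^ 2) * ((1 - δ) * (δ + δ ^ 2 / 2)) := by linear_combination key
    _ ≤ (1 + 2 * δ ^ 2) * ((1 - δ) * (-Real.log (1 - δ))) := by gcongr
end

section
/- Let θ ∈ (0,1) be an irrational number with continued fraction expansion θ = [a₁, a₂, …] and convergent denominators q₀ = 1, q₁ = a₁, qₙ₊₁ = aₙ₊₁ qₙ + qₙ₋₁. Then for every integer n ≥ 5 and every integer k with 0 < k < qₙ₋₂, one has ‖kθ‖ ≥ 3 · ‖qₙθ‖, where ‖x‖ denotes the distance from the real number x to the nearest integer. (Equivalently, for the rigid rotation R_θ : x ↦ x + θ on ℝ/ℤ and any point z, the translates R_θ^{−k}(I) of the arc I of length 3‖qₙθ‖ stretching from R_θ^{−qₙ}(z) through z and R_θ^{qₙ}(z) to R_θ^{2qₙ}(z), for 0 ≤ k ≤ qₙ₋₂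 − 1, are pairwise disjoint.) -/
/-!
Put `d n = x 0 * ⋯ * x n`. There are integers `p n` with `q n * θ - p n = (-1) ^ n * d n`,
and `q n * p (n + 1) - q (n + 1) * p n = (-1) ^ n`. The argument rests on two facts.

* Best approximation (`best_approx`): for `0 < k < q (m + 1)` and every integer `P`,
  `|k * θ - P| ≥ d m`. The pair `(k, P)` is an integral combination `u (q m, p m) +
  v (q (m + 1), p (m + 1))`; the bounds on `k` force `u ≠ 0` and prevent `u` and `v` from having
  the same strict sign, so the two errors, which alternate in sign, add up without cancellation.
* Decay: since `d m = a (m + 2) * d (m + 1) + d (m + 2)` with `a (m + 2) ≥ 1`,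
  `d m ≥ d (m + 1) + d (m + 2) ≥ 2 * d (m + 2) + d (m + 3) ≥ 3 * d (m + 3)`.

With `n = m + 3` these give `‖kθ‖ ≥ d m ≥ 3 * d n ≥ 3 * ‖q n θ‖`.
-/

/-- Best approximation in abstract form: `(q, p)` and `(q', r)` stand for consecutive
convergents, with approximation errors `d`, `d'` of opposite signs and determinant `s = ±1`. -/
lemma best_approx {θ d d' : ℝ} {q q' p r s k P : ℤ} (hs : s = 1 ∨ s = -1)
    (hq : 0 < q) (hd : 0 < d) (hd' : 0 < d')
    (h1 : q * θ - p = s * d) (h2 : q' * θ - r = -s * d') (hdet : q * r - q' * p = s)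
    (hk0 : 0 < k) (hk : k < q') : d ≤ |k * θ - P| := by
  obtain ⟨u, v, hu, hv⟩ : ∃ u v : ℤ, k = u * q + v * q' ∧ P = u * p + v * r := by
    have hss : s * s = 1 := by rcases hs with rfl | rfl <;> norm_num
    refine ⟨s * (k * r - P * q'), s * (q * P - p * k), ?_, ?_⟩
    · linear_combination (-k) * hss - s * k * hdet
    · linear_combination (-P) * hss - s * P * hdet
  have hq' : 0 < q' := hk0.trans hk
  have key : (k : ℝ) * θ - P = s * (u * d - v * d') := by
    rw [hu, hv]
    push_cast
    linear_combination (u : ℝ) * h1 + (v : ℝ) * h2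
  have habs : |(k : ℝ) * θ - P| = |(u : ℝ) * d - v * d'| := by
    rw [key, abs_mul]
    rcases hs with rfl | rfl <;> simp
  have huv : (1 ≤ u ∧ v ≤ 0) ∨ (u ≤ -1 ∧ 0 ≤ v) := by
    rcases lt_trichotomy u 0 with h | h | h
    · right
      refine ⟨by omega, ?_⟩
      by_contra! hv0
      nlinarith
    · subst h
      have hv0 : 0 < v := by
        by_contra! hv0
        nlinarith
      nlinarith
    · left
      refine ⟨by omega, ?_⟩
      by_contra! hv0
      nlinarith
  rw [habs]
  rcases huv with ⟨h, h'⟩ | ⟨h, h'⟩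
  · have e : (1 : ℝ) ≤ u := by exact_mod_cast h
    have e' : (v : ℝ) ≤ 0 := by exact_mod_cast h'
    exact le_trans (by nlinarith) (le_abs_self _)
  · have e : (u : ℝ) ≤ -1 := by exact_mod_cast h
    have e' : (0 : ℝ) ≤ v := by exact_mod_cast h'
    exact le_trans (by nlinarith) (neg_le_abs _)

/-- First assertion of the paper's Lemma 4.21: for an irrational `θ ∈ (0,1)`
with continued fraction denominators `qₙ`, for every `n ≥ 5` and every
`0 < k < qₙ₋₂` one has `‖kθ‖ ≥ 3‖qₙθ‖`, where `‖·‖` is the distance to the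
nearest integer. -/
theorem dist_k_theta_ge_three_dist_qn_theta (θ : ℝ) (hθ : Irrational θ)
    (hθ01 : θ ∈ Set.Ioo (0 : ℝ) 1)
    (a : ℕ → ℕ) (x : ℕ → ℝ)
    (hx0 : x 0 = θ)
    (hxIoo : ∀ n, x n ∈ Set.Ioo (0 : ℝ) 1)
    (ha : ∀ n, (a (n + 1) : ℤ) = ⌊1 / x n⌋)
    (hxrec : ∀ n, x (n + 1) = 1 / x n - (a (n + 1) : ℝ))
    (q : ℕ → ℕ)
    (hq0 : q 0 = 1) (hq1 : q 1 = a 1)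
    (hqrec : ∀ n, q (n + 2) = a (n + 2) * q (n + 1) + q n)
    (n : ℕ) (hn : 5 ≤ n) (k : ℕ) (hk0 : 0 < k) (hk : k < q (n - 2)) :
    |(k : ℝ) * θ - round ((k : ℝ) * θ)| ≥
      3 * |(q n : ℝ) * θ - round ((q n : ℝ) * θ)| := by
  have hxpos : ∀ n, 0 < x n := fun n => (hxIoo n).1
  have ha1 : ∀ n, 1 ≤ a (n + 1) := by
    intro n
    have h : (1 : ℤ) ≤ ⌊1 / x n⌋ := by
      rw [Int.le_floor, Int.cast_one]
      exact (one_le_div (hxpos n)).2 (hxIoo n).2.le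
    rw [← ha n] at h
    exact_mod_cast h
  have hq : ∀ n, 0 < q n ∧ 0 < q (n + 1) := by
    intro n
    induction n with
    | zero => exact ⟨by omega, by rw [zero_add, hq1]; exact ha1 0⟩
    | succ n ih => exact ⟨ih.2, by rw [hqrec]; exact Nat.add_pos_right _ ih.1⟩
  obtain ⟨d, hd0, hd⟩ : ∃ d : ℕ → ℝ, d 0 = θ ∧ ∀ n, d (n + 1) = d n * x (n + 1) :=
    ⟨fun n => ∏ i ∈ Finset.range (n + 1), x i, by simp [hx0],
      fun n => Finset.prod_range_succ _ _⟩
  have hdpos : ∀ n, 0 < d n := by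
    intro n
    induction n with
    | zero => rw [hd0]; exact hθ01.1
    | succ n ih => rw [hd]; exact mul_pos ih (hxpos _)
  have hdrec : ∀ n, d n = a (n + 2) * d (n + 1) + d (n + 2) := by
    intro n
    have := (hxpos (n + 1)).ne'
    rw [hd (n + 1), hxrec (n + 1), hd n]
    field_simp
    ring
  have hconv : ∀ m, ∃ p r s : ℤ, (s = 1 ∨ s = -1) ∧ (q m : ℝ) * θ - p = s * d m ∧
      (q (m + 1) : ℝ) * θ - r = -s * d (m + 1) ∧ (q m : ℤ) * r - q (m + 1) * p = s := by
    intro m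
    induction m with
    | zero =>
      refine ⟨0, 1, 1, Or.inl rfl, by simp [hq0, hd0], ?_, by simp [hq0]⟩
      have hθ0 : θ ≠ 0 := hθ01.1.ne'
      rw [hd 0, hxrec 0, hd0, hx0, zero_add, hq1]
      field_simp
      push_cast
      ring
    | succ m ih =>
      obtain ⟨p, r, s, hs, h1, h2, h3⟩ := ih
      refine ⟨r, a (m + 2) * r + p, -s, by omega, by rw [h2]; push_cast; ring, ?_, ?_⟩
      · have h := hdrec m
        rw [show m + 1 + 1 = m + 2 from rfl, hqrec m]
        push_cast
        linear_combination (a (m + 2) : ℝ) * h2 + h1 + (s : ℝ) * h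
      · rw [show m + 1 + 1 = m + 2 from rfl, hqrec m]
        push_cast
        linear_combination -h3
  have hdge : ∀ n, d (n + 1) + d (n + 2) ≤ d n := by
    intro n
    have h : (1 : ℝ) ≤ a (n + 2) := by exact_mod_cast ha1 (n + 1)
    nlinarith [hdrec n, hdpos (n + 1)]
  obtain ⟨m, rfl⟩ : ∃ m, n = m + 3 := ⟨n - 3, by omega⟩
  rw [show m + 3 - 2 = m + 1 by omega] at hk
  have hlow : d m ≤ |(k : ℝ) * θ - round ((k : ℝ) * θ)| := by
    obtain ⟨p, r, s, hs, h1, h2, h3⟩ := hconv m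
    have := best_approx (θ := θ) (q := q m) (q' := q (m + 1)) (k := k)
      (P := round ((k : ℝ) * θ)) hs (by exact_mod_cast (hq m).1) (hdpos m) (hdpos (m + 1))
      (by exact_mod_cast h1) (by exact_mod_cast h2) h3 (by exact_mod_cast hk0)
      (by exact_mod_cast hk)
    simpa using this
  have hup : |(q (m + 3) : ℝ) * θ - round ((q (m + 3) : ℝ) * θ)| ≤ d (m + 3) := by
    obtain ⟨p, r, s, hs, h1, -, -⟩ := hconv (m + 3)
    refine (round_le _ p).trans ?_
    rw [h1, abs_mul, abs_of_pos (hdpos _)]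
    rcases hs with rfl | rfl <;> simp
  linarith [hdge m, hdge (m + 1), hdge (m + 2), hdpos (m + 4)]
end
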